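/- For every natural number n with n ∉ {1,2} and every z ∈ ℂ with 1 + 2z² ≠ 0, the function Ĥₙ satisfies the exceptional Hermite differential equation: Ĥₙ''(z) − 2·(z + 4z/(1+2z²))·Ĥₙ'(z) + 2n·Ĥₙ(z) = 0. -/

import Mathlib

/-- Physicists' Hermite polynomials via the Rodrigues formula (complex version). -/
noncomputable def Hc (n : ℕ) (z : ℂ) : ℂ :=
  (-1) ^ n * Complex.exp (z ^ 2) * iteratedDeriv n (fun t => Complex.exp (-t ^ 2)) z

/-- The function Ĥₙ. -/
noncomputable def Hhatc (n : ℕ) (z : ℂ) : ℂ :=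
  Hc n z + 4 * (n : ℂ) * Hc (n - 2) z + 4 * (n : ℂ) * ((n : ℂ) - 3) * Hc (n - 4) z

/-!
The operator `T y = (1 + 2z²) y'' - 4z y' + 4y`, one quarter of the Wronskian of `H₁`, `H₂`, `y`,
satisfies `(T y)' = (1 + 2z²) y'''`. The exceptional operator applied to `T y` therefore involves no
division, and for a solution `y` of the Hermite equation `y'' = 2z y' - 2ν y`, with `ν` an
arbitrary scalar, it collapses to `4 (y'' - 2z y' + 2ν y) = 0`.

Since `Hₙ'' = 4n(n-1) Hₙ₋₂` and `Hₙ'''' = 16n(n-1)(n-2)(n-3) Hₙ₋₄`, the function `Ĥₙ` is a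
combination of even derivatives of `Hₙ`, and the Hermite equation turns it into
`2(n-1)(n-2) Ĥₙ = T Hₙ`, so `Ĥₙ` inherits the equation upon division by `2(n-1)(n-2)`.
-/

section IteratedDeriv

variable {𝕜 F : Type*} [NontriviallyNormedField 𝕜] [NormedAddCommGroup F] [NormedSpace 𝕜 F]

theorem hasDerivAt_iteratedDeriv {m : ℕ} {f : 𝕜 → F} (hf : ContDiff 𝕜 (m + 1) f) (z : 𝕜) :
    HasDerivAt (iteratedDeriv m f) (iteratedDeriv (m + 1) f z) z := by
  rw [iteratedDeriv_succ]
  exact (hf.differentiable_iteratedDeriv m (by exact_mod_cast m.lt_succ_self) z).hasDerivAt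

theorem iteratedDeriv_add_two_of_linear_ode {a b : 𝕜} {f : 𝕜 → 𝕜}
    (hode : ∀ z, iteratedDeriv 2 f z = a * z * deriv f z - b * f z) (m : ℕ)
    (hf : ContDiff 𝕜 (m + 2) f) (z : 𝕜) :
    iteratedDeriv (m + 2) f z =
      a * z * iteratedDeriv (m + 1) f z - (b - m * a) * iteratedDeriv m f z := by
  induction m generalizing z with
  | zero => simpa using hode z
  | succ m ih =>
    have smooth (j : ℕ) (hj : j ≤ m + 3) : ContDiff 𝕜 j f :=
      hf.of_le (by exact_mod_cast hj)
    have hder (j : ℕ) (hj : j ≤ m + 2) :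
        HasDerivAt (iteratedDeriv j f) (iteratedDeriv (j + 1) f z) z :=
      hasDerivAt_iteratedDeriv (mod_cast smooth (j + 1) (by lia)) z
    have hstep := hder (m + 2) le_rfl
    rw [funext (ih (mod_cast smooth (m + 2) (by lia)))] at hstep
    have hleibniz := (((hasDerivAt_id' z).const_mul a).mul (hder (m + 1) (by lia))).sub
      ((hder m (by lia)).const_mul (b - m * a))
    push_cast
    linear_combination hstep.unique hleibniz

end IteratedDeriv

section Darboux

variable {𝕜 : Type*} [NontriviallyNormedField 𝕜] {y : 𝕜 → 𝕜}

/-- The two-step Darboux transformation of the Hermite operator with seed functions `H₁` and `H₂`,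
normalised as one quarter of the Wronskian of `H₁ = 2z`, `H₂ = 4z² - 2` and `y`. -/
noncomputable def hermiteDarboux (y : 𝕜 → 𝕜) (z : 𝕜) : 𝕜 :=
  (1 + 2 * z ^ 2) * iteratedDeriv 2 y z - 4 * z * deriv y z + 4 * y z

theorem hasDerivAt_one_add_two_mul_sq (z : 𝕜) :
    HasDerivAt (fun x : 𝕜 => 1 + 2 * x ^ 2) (4 * z) z := by
  refine (((hasDerivAt_pow 2 z).const_mul 2).const_add 1).congr_deriv ?_
  push_cast
  ring

theorem deriv_hermiteDarboux (hy : ContDiff 𝕜 3 y) :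
    deriv (hermiteDarboux y) = fun z => (1 + 2 * z ^ 2) * iteratedDeriv 3 y z := by
  funext z
  have hy₀ : HasDerivAt y (deriv y z) z := (hy.differentiable (by norm_num) z).hasDerivAt
  have hy₁ : HasDerivAt (deriv y) (iteratedDeriv 2 y z) z := by
    simpa using hasDerivAt_iteratedDeriv (m := 1) (hy.of_le (by norm_num)) z
  have hy₂ : HasDerivAt (iteratedDeriv 2 y) (iteratedDeriv 3 y z) z :=
    hasDerivAt_iteratedDeriv (hy.of_le (by norm_num)) z
  refine (((((hasDerivAt_one_add_two_mul_sq z).mul hy₂).sub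
    (((hasDerivAt_id' z).const_mul 4).mul hy₁)).add (hy₀.const_mul 4)).congr_deriv ?_).deriv
  ring

theorem deriv_deriv_hermiteDarboux (hy : ContDiff 𝕜 4 y) (z : 𝕜) :
    deriv (deriv (hermiteDarboux y)) z =
      4 * z * iteratedDeriv 3 y z + (1 + 2 * z ^ 2) * iteratedDeriv 4 y z := by
  rw [deriv_hermiteDarboux (hy.of_le (by norm_num))]
  have hy₃ : HasDerivAt (iteratedDeriv 3 y) (iteratedDeriv 4 y z) z :=
    hasDerivAt_iteratedDeriv (hy.of_le (by norm_num)) z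
  exact ((hasDerivAt_one_add_two_mul_sq z).mul hy₃).deriv

theorem iteratedDeriv_three_of_hermite_ode {ν : 𝕜} (hy : ContDiff 𝕜 3 y)
    (hode : ∀ z, iteratedDeriv 2 y z = 2 * z * deriv y z - 2 * ν * y z) (z : 𝕜) :
    iteratedDeriv 3 y z = 2 * z * iteratedDeriv 2 y z - 2 * (ν - 1) * deriv y z := by
  have h := iteratedDeriv_add_two_of_linear_ode hode 1 (hy.of_le (by norm_num)) z
  norm_num [iteratedDeriv_one] at h
  linear_combination h

theorem iteratedDeriv_four_of_hermite_ode {ν : 𝕜} (hy : ContDiff 𝕜 4 y)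
    (hode : ∀ z, iteratedDeriv 2 y z = 2 * z * deriv y z - 2 * ν * y z) (z : 𝕜) :
    iteratedDeriv 4 y z = 2 * z * iteratedDeriv 3 y z - 2 * (ν - 2) * iteratedDeriv 2 y z := by
  have h := iteratedDeriv_add_two_of_linear_ode hode 2 (hy.of_le (by norm_num)) z
  norm_num at h
  linear_combination h

theorem hermiteDarboux_exceptional_ode {ν : 𝕜} (hy : ContDiff 𝕜 4 y)
    (hode : ∀ z, iteratedDeriv 2 y z = 2 * z * deriv y z - 2 * ν * y z)
    {z : 𝕜} (hz : 1 + 2 * z ^ 2 ≠ 0) :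
    deriv (deriv (hermiteDarboux y)) z
      - 2 * (z + 4 * z / (1 + 2 * z ^ 2)) * deriv (hermiteDarboux y) z
      + 2 * ν * hermiteDarboux y z = 0 := by
  have hy₃ := iteratedDeriv_three_of_hermite_ode (hy.of_le (by norm_num)) hode z
  have hy₄ := iteratedDeriv_four_of_hermite_ode hy hode z
  have hcancel : 4 * z / (1 + 2 * z ^ 2) * (1 + 2 * z ^ 2) = 4 * z := div_mul_cancel₀ _ hz
  rw [deriv_deriv_hermiteDarboux hy, deriv_hermiteDarboux (hy.of_le (by norm_num)), hermiteDarboux]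
  linear_combination (1 + 2 * z ^ 2) * hy₄ - 4 * z * hy₃ + 4 * hode z
    - 2 * iteratedDeriv 3 y z * hcancel

end Darboux

theorem contDiff_cexp_neg_sq {m : WithTop ℕ∞} : ContDiff ℂ m fun t : ℂ => Complex.exp (-t ^ 2) := by
  fun_prop

theorem deriv_cexp_neg_sq :
    deriv (fun t : ℂ => Complex.exp (-t ^ 2)) = fun z => -2 * z * Complex.exp (-z ^ 2) := by
  funext z
  refine ((hasDerivAt_pow 2 z).fun_neg.cexp.congr_deriv ?_).deriv
  push_cast
  ring

theorem cexp_neg_sq_linear_ode (z : ℂ) :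
    iteratedDeriv 2 (fun t : ℂ => Complex.exp (-t ^ 2)) z =
      -2 * z * deriv (fun t : ℂ => Complex.exp (-t ^ 2)) z - 2 * Complex.exp (-z ^ 2) := by
  have hgauss : HasDerivAt (fun t : ℂ => Complex.exp (-t ^ 2)) _ z :=
    (contDiff_cexp_neg_sq.differentiable one_ne_zero z).hasDerivAt
  rw [iteratedDeriv_succ, iteratedDeriv_one]
  conv_lhs => rw [deriv_cexp_neg_sq]
  refine ((((hasDerivAt_id' z).const_mul (-2)).mul hgauss).congr_deriv ?_).deriv
  ring

theorem Hc_zero (z : ℂ) : Hc 0 z = 1 := by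
  simp [Hc, ← Complex.exp_add]

theorem Hc_add_two (n : ℕ) (z : ℂ) :
    Hc (n + 2) z = 2 * z * Hc (n + 1) z - 2 * (n + 1) * Hc n z := by
  have hgauss := iteratedDeriv_add_two_of_linear_ode cexp_neg_sq_linear_ode n
    contDiff_cexp_neg_sq z
  simp only [Hc, hgauss]
  ring

theorem hasDerivAt_Hc (n : ℕ) (z : ℂ) : HasDerivAt (Hc n) (2 * z * Hc n z - Hc (n + 1) z) z := by
  have hgauss := hasDerivAt_iteratedDeriv (m := n) contDiff_cexp_neg_sq z
  refine (((hasDerivAt_pow 2 z).cexp.const_mul ((-1) ^ n)).mul hgauss).congr_deriv ?_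
  push_cast [Hc]
  ring

theorem contDiff_Hc (n : ℕ) {m : WithTop ℕ∞} : ContDiff ℂ m (Hc n) :=
  Differentiable.contDiff fun z => (hasDerivAt_Hc n z).differentiableAt

theorem deriv_Hc (n : ℕ) (z : ℂ) : deriv (Hc n) z = 2 * n * Hc (n - 1) z := by
  cases n with
  | zero => simp [funext Hc_zero]
  | succ n =>
    rw [(hasDerivAt_Hc (n + 1) z).deriv, Hc_add_two, Nat.add_sub_cancel]
    push_cast
    ring

theorem iteratedDeriv_Hc (n m : ℕ) (z : ℂ) :
    iteratedDeriv m (Hc n) z = 2 ^ m * (descPochhammer ℂ m).eval (n : ℂ) * Hc (n - m) z := by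
  induction m generalizing z with
  | zero => simp
  | succ m ih =>
    rw [iteratedDeriv_succ, funext ih, deriv_const_mul_field, deriv_Hc, descPochhammer_succ_eval,
      Nat.sub_sub]
    obtain hmn | hnm := le_or_gt m n
    · rw [Nat.cast_sub hmn]
      ring
    · have hvanish : (descPochhammer ℂ m).eval (n : ℂ) = 0 := by
        rw [descPochhammer_eval_eq_descFactorial, Nat.descFactorial_of_lt hnm, Nat.cast_zero]
      simp [hvanish]

theorem Hc_hermite_ode (n : ℕ) (z : ℂ) :
    iteratedDeriv 2 (Hc n) z = 2 * z * deriv (Hc n) z - 2 * n * Hc n z := by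
  have hraise : deriv (Hc n) = fun z => 2 * z * Hc n z - Hc (n + 1) z :=
    funext fun z => (hasDerivAt_Hc n z).deriv
  have hHc := (hasDerivAt_Hc n z).differentiableAt.hasDerivAt
  have hHc_succ := (hasDerivAt_Hc (n + 1) z).differentiableAt.hasDerivAt
  rw [iteratedDeriv_succ, iteratedDeriv_one]
  conv_lhs => rw [hraise]
  refine (((((hasDerivAt_id' z).const_mul 2).mul hHc).sub hHc_succ).congr_deriv ?_).deriv
  rw [deriv_Hc (n + 1), Nat.add_sub_cancel]
  push_cast
  ring

theorem mul_Hhatc_eq_even_iteratedDeriv_Hc (n : ℕ) (z : ℂ) :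
    4 * (n - 1) * (n - 2) * Hhatc n z =
      4 * (n - 1) * (n - 2) * Hc n z + 4 * (n - 2) * iteratedDeriv 2 (Hc n) z
        + iteratedDeriv 4 (Hc n) z := by
  rw [Hhatc, iteratedDeriv_Hc n 2, iteratedDeriv_Hc n 4]
  simp only [descPochhammer_succ_eval, descPochhammer_zero, Polynomial.eval_one]
  push_cast
  ring

theorem mul_Hhatc_eq_hermiteDarboux_Hc (n : ℕ) (z : ℂ) :
    2 * (n - 1) * (n - 2) * Hhatc n z = hermiteDarboux (Hc n) z := by
  have hode := Hc_hermite_ode n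
  have hy₃ := iteratedDeriv_three_of_hermite_ode (contDiff_Hc n) hode z
  have hy₄ := iteratedDeriv_four_of_hermite_ode (contDiff_Hc n) hode z
  rw [hermiteDarboux]
  linear_combination (1 / 2) * mul_Hhatc_eq_even_iteratedDeriv_Hc n z + (1 / 2) * hy₄ + z * hy₃
    + (n - 3) * hode z

theorem stmt1 (n : ℕ) (hn : n ∉ ({1, 2} : Set ℕ)) (z : ℂ) (hz : 1 + 2 * z ^ 2 ≠ 0) :
    deriv (deriv (Hhatc n)) z
      - 2 * (z + 4 * z / (1 + 2 * z ^ 2)) * deriv (Hhatc n) z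
      + 2 * (n : ℂ) * Hhatc n z = 0 := by
  obtain ⟨hn₁, hn₂⟩ : n ≠ 1 ∧ n ≠ 2 := by simpa using hn
  set c : ℂ := 2 * (n - 1) * (n - 2)
  have hc : c ≠ 0 :=
    mul_ne_zero (mul_ne_zero two_ne_zero (sub_ne_zero.2 (mod_cast hn₁)))
      (sub_ne_zero.2 (mod_cast hn₂))
  have hHhatc : Hhatc n = fun z => c⁻¹ * hermiteDarboux (Hc n) z :=
    funext fun z => (eq_inv_mul_iff_mul_eq₀ hc).2 (mul_Hhatc_eq_hermiteDarboux_Hc n z)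
  have hode := hermiteDarboux_exceptional_ode (contDiff_Hc n) (Hc_hermite_ode n) hz
  have hderiv : deriv (Hhatc n) = fun z => c⁻¹ * deriv (hermiteDarboux (Hc n)) z := by
    funext z
    rw [hHhatc, deriv_const_mul_field]
  rw [hderiv, deriv_const_mul_field, hHhatc]
  linear_combination c⁻¹ * hode
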